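/- Let u be a smooth real-valued function on ℝ^{1+3} with □u = 0, and fix R₁ > 0 and R₂ ∈ ℝ with |R₂| < R₁. If u(t,x) = 0 at every point with t > 0 and r² − (t+R₂)² > R₁² − R₂², then u(t,x) = 0 at every point with t > 0, r + t > R₁ and r − t > R₂. -/

import Mathlib

noncomputable section
open MeasureTheory Real Set Filter Topology

namespace UCP

/-- Spacetime `ℝ^{1+3}`: a point is `(t, x)` with `x ∈ ℝ³`. -/
abbrev Spc : Type := ℝ × EuclideanSpace ℝ (Fin 3)

/-- Coordinate directions `e_α`, `α = 0,1,2,3` (`e_0` is the time direction). -/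
def eVec (α : Fin 4) : Spc :=
  Fin.cases ((1 : ℝ), (0 : EuclideanSpace ℝ (Fin 3)))
    (fun i => ((0 : ℝ), EuclideanSpace.single i (1 : ℝ))) α

/-- The partial derivative `∂_α u`. -/
def pd (α : Fin 4) (u : Spc → ℝ) (p : Spc) : ℝ := fderiv ℝ u p (eVec α)

/-- `∂_t u`. -/
def dt (u : Spc → ℝ) : Spc → ℝ := pd 0 u

/-- `∂_i u`, `i = 1,2,3`. -/
def dxi (i : Fin 3) (u : Spc → ℝ) : Spc → ℝ := pd i.succ u

/-- The d'Alembertian `□u = -∂_t² u + Δ_x u`. -/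
def box (u : Spc → ℝ) (p : Spc) : ℝ :=
  - dt (dt u) p + ∑ i : Fin 3, dxi i (dxi i u) p

/-- Signs of the Minkowski metric `diag(-1,1,1,1)`, so that `∂^α = eta α • ∂_α`. -/
def eta (α : Fin 4) : ℝ := if α = 0 then -1 else 1

/-- `r = |x|`. -/
def rr (p : Spc) : ℝ := ‖p.2‖

/-- The radial derivative `∂_r u = Σ_i (x_i/r) ∂_i u`. -/
def dr (u : Spc → ℝ) (p : Spc) : ℝ := ∑ i : Fin 3, (p.2 i / rr p) * dxi i u p

/-- `ω̂ = (-1, x/r)` as a `Fin 4`-indexed family. -/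
def hatom (p : Spc) (α : Fin 4) : ℝ := Fin.cases (-1 : ℝ) (fun i => p.2 i / rr p) α

/-!
If `u` and `v` solve the wave equation, `∫ (∂_t u v - u ∂_t v) dx` is constant in time. Take for `v`
the outgoing and incoming spherical waves `F(r ∓ (τ - t)) / r` with `F` supported in `[a, ∞)`; they
live outside the cones `r = a ± (τ - t)`. If `a - t > R₂`, the first cone eventually leaves the
hyperboloid as `τ → ∞`, and if `a + t > R₁`, the second one has left it as `τ → 0⁺`; there `u` and
`v` have disjoint supports. Hence both conserved quantities vanish, also at time `t`, and their
difference shows that `u(t, ·)` is orthogonal to every smooth radial function supported in `r ≥ a`.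

The derivatives `∂_c ^ k u` are solutions of the same kind. Integrating by parts therefore shows
that all moments `∫ u φ(r) ⟨x, c⟩ⁿ dx` vanish, so that the compactly supported function
`u(t, ·) φ(r)` has zero Fourier transform.
-/

section DirectionalDerivative

open scoped ContDiff

variable {E : Type*} [NormedAddCommGroup E] [NormedSpace ℝ E] {f : E → ℝ} {x : E}

/-- The directional derivative `∂_v f`, as an operator on functions so that it can be iterated. -/
def dirDeriv (v : E) (f : E → ℝ) (x : E) : ℝ := fderiv ℝ f x v

lemma dirDeriv_congr {g : E → ℝ} (h : f =ᶠ[𝓝 x] g) (v : E) : dirDeriv v f x = dirDeriv v g x :=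
  congrArg (fun L : E →L[ℝ] ℝ => L v) h.fderiv_eq

lemma contDiffAt_dirDeriv {m n : ℕ∞ω} (hf : ContDiffAt ℝ n f x) (hmn : m + 1 ≤ n) (v : E) :
    ContDiffAt ℝ m (dirDeriv v f) x :=
  (hf.fderiv_right hmn).clm_apply contDiffAt_const

lemma contDiff_dirDeriv {m n : ℕ∞ω} (hf : ContDiff ℝ n f) (hmn : m + 1 ≤ n) (v : E) :
    ContDiff ℝ m (dirDeriv v f) :=
  contDiff_iff_contDiffAt.mpr fun _ => contDiffAt_dirDeriv hf.contDiffAt hmn v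

lemma tsupport_dirDeriv_subset (v : E) (f : E → ℝ) : tsupport (dirDeriv v f) ⊆ tsupport f :=
  tsupport_fderiv_apply_subset ℝ v

lemma tsupport_iterate_dirDeriv_subset (v : E) (f : E → ℝ) (k : ℕ) :
    tsupport ((dirDeriv v)^[k] f) ⊆ tsupport f := by
  induction k with
  | zero => rfl
  | succ k ih =>
    rw [Function.iterate_succ_apply']
    exact (tsupport_dirDeriv_subset v _).trans ih

lemma dirDeriv_sub {g : E → ℝ} (hf : DifferentiableAt ℝ f x) (hg : DifferentiableAt ℝ g x)
    (v : E) : dirDeriv v (fun y => f y - g y) x = dirDeriv v f x - dirDeriv v g x := by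
  simp only [dirDeriv, fderiv_fun_sub hf hg, sub_apply]

lemma dirDeriv_mul {g : E → ℝ} (hf : DifferentiableAt ℝ f x) (hg : DifferentiableAt ℝ g x)
    (v : E) : dirDeriv v (fun y => f y * g y) x = dirDeriv v f x * g x + f x * dirDeriv v g x := by
  simp only [dirDeriv, fderiv_fun_mul hf hg, add_apply, smul_apply, smul_eq_mul]
  ring

lemma dirDeriv_dirDeriv (hf : ContDiffAt ℝ 2 f x) (v w : E) :
    dirDeriv v (dirDeriv w f) x = fderiv ℝ (fderiv ℝ f) x v w := by
  have hf' : DifferentiableAt ℝ (fderiv ℝ f) x :=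
    (hf.fderiv_right (m := 1) (by norm_num)).differentiableAt one_ne_zero
  change fderiv ℝ (fun y => fderiv ℝ f y w) x v = _
  simp [fderiv_clm_apply hf' (differentiableAt_const w)]

lemma dirDeriv_comm (hf : ContDiffAt ℝ 2 f x) (v w : E) :
    dirDeriv v (dirDeriv w f) x = dirDeriv w (dirDeriv v f) x := by
  rw [dirDeriv_dirDeriv hf, dirDeriv_dirDeriv hf]
  exact hf.isSymmSndFDerivAt (by simp) v w

lemma dirDeriv_dirDeriv_comm (hf : ContDiffAt ℝ 3 f x) (v w : E) :
    dirDeriv v (dirDeriv v (dirDeriv w f)) x = dirDeriv w (dirDeriv v (dirDeriv v f)) x := by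
  have hnear : dirDeriv v (dirDeriv w f) =ᶠ[𝓝 x] dirDeriv w (dirDeriv v f) := by
    filter_upwards [hf.eventually (by simp)] with y hy
      using dirDeriv_comm (hy.of_le (by norm_num)) v w
  rw [dirDeriv_congr hnear, dirDeriv_comm (contDiffAt_dirDeriv hf (by norm_num) v)]

lemma dirDeriv_slice {u : ℝ × E → ℝ} {τ : ℝ} (hu : DifferentiableAt ℝ u (τ, x)) (v : E) :
    dirDeriv v (fun y => u (τ, y)) x = dirDeriv (0, v) u (τ, x) := by
  have hcomp := hu.hasFDerivAt.comp x (hasFDerivAt_prodMk_right τ x)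
  change fderiv ℝ (u ∘ fun y => (τ, y)) x v = _
  simp [hcomp.fderiv, dirDeriv]

lemma dirDeriv_dirDeriv_slice {u : ℝ × E → ℝ} {τ : ℝ} (hu : ContDiffAt ℝ 2 u (τ, x)) (v : E) :
    dirDeriv v (dirDeriv v fun y => u (τ, y)) x = dirDeriv (0, v) (dirDeriv (0, v) u) (τ, x) := by
  have hnear : (dirDeriv v fun y => u (τ, y)) =ᶠ[𝓝 x] fun y => dirDeriv (0, v) u (τ, y) := by
    have hcont : ContinuousAt (fun y => (τ, y)) x := by fun_prop
    filter_upwards [hcont.eventually (hu.eventually (by simp))] with y hy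
      using dirDeriv_slice (hy.differentiableAt two_ne_zero) v
  rw [dirDeriv_congr hnear, dirDeriv_slice]
  exact (contDiffAt_dirDeriv (m := 1) hu (by norm_num) _).differentiableAt one_ne_zero

lemma iterate_dirDeriv_slice {u : ℝ × E → ℝ} {τ : ℝ} (hu : ∀ x, ContDiffAt ℝ ∞ u (τ, x))
    (v : E) (k : ℕ) : ((dirDeriv v)^[k] fun y => u (τ, y)) =
      fun y => (dirDeriv (0, v))^[k] u (τ, y) := by
  induction k generalizing u with
  | zero => rfl
  | succ k ih =>
    have hslice : (dirDeriv v fun y => u (τ, y)) = fun y => dirDeriv (0, v) u (τ, y) :=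
      funext fun y => dirDeriv_slice ((hu y).differentiableAt (by simp)) v
    rw [Function.iterate_succ_apply, Function.iterate_succ_apply, hslice]
    exact ih fun y => contDiffAt_dirDeriv (hu y) (by simp) _

lemma hasDerivAt_time {u : ℝ × E → ℝ} {τ : ℝ} (hu : DifferentiableAt ℝ u (τ, x)) :
    HasDerivAt (fun σ => u (σ, x)) (dirDeriv (1, 0) u (τ, x)) τ := by
  simpa [Function.comp_def, dirDeriv] using
    (hu.hasFDerivAt.comp τ (hasFDerivAt_prodMk_left τ x)).hasDerivAt

end DirectionalDerivative

section Profiles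

open scoped ContDiff

/-- A smooth radial profile living in the exterior region `r > a`: it vanishes on `(-∞, a]`.
For `a > 0` this keeps the singularity of `x ↦ ‖x‖` and of `1 / r` at the origin harmless. -/
structure ExteriorProfile (a : ℝ) (φ : ℝ → ℝ) : Prop where
  contDiff : ContDiff ℝ ∞ φ
  eq_zero : ∀ s ≤ a, φ s = 0

namespace ExteriorProfile

variable {a : ℝ} {φ : ℝ → ℝ}

lemma hasDerivAt (h : ExteriorProfile a φ) (s : ℝ) : HasDerivAt φ (_root_.deriv φ s) s :=
  (h.contDiff.differentiable (by simp) s).hasDerivAt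

lemma id_mul (h : ExteriorProfile a φ) : ExteriorProfile a (fun s => s * φ s) :=
  ⟨contDiff_id.mul h.contDiff, fun s hs => by simp [h.eq_zero s hs]⟩

lemma comp_sub_const (h : ExteriorProfile a φ) (s : ℝ) :
    ExteriorProfile (a + s) (fun σ => φ (σ - s)) :=
  ⟨h.contDiff.comp (contDiff_id.sub contDiff_const), fun σ hσ => h.eq_zero _ (by linarith)⟩

protected lemma deriv (h : ExteriorProfile a φ) : ExteriorProfile a (deriv φ) := by
  have hφ' : ContDiff ℝ ∞ (deriv φ) := (contDiff_infty_iff_deriv.mp h.contDiff).2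
  have hzero : EqOn (deriv φ) 0 (Iio a) := fun s hs => by
    have : φ =ᶠ[𝓝 s] fun _ => 0 := by
      filter_upwards [Iio_mem_nhds hs] with y hy using h.eq_zero y (le_of_lt hy)
    simp [this.deriv_eq]
  refine ⟨hφ', fun s hs => hzero.closure hφ'.continuous continuous_zero ?_⟩
  rwa [closure_Iio, mem_Iic]

lemma div_id (h : ExteriorProfile a φ) (ha : 0 < a) : ExteriorProfile a (fun s => φ s / s) := by
  refine ⟨contDiff_iff_contDiffAt.mpr fun s => ?_, fun s hs => by simp [h.eq_zero s hs]⟩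
  rcases lt_or_ge s a with hs | hs
  · refine contDiffAt_const (c := (0 : ℝ)) |>.congr_of_eventuallyEq ?_
    filter_upwards [Iio_mem_nhds hs] with y hy
    simp [h.eq_zero y (le_of_lt hy)]
  · exact h.contDiff.contDiffAt.div contDiffAt_id (ha.trans_le hs).ne'

lemma deriv_div_id (h : ExteriorProfile a φ) (ha : 0 < a) :
    deriv (fun s => φ s / s) = fun s => deriv φ s / s - φ s / s ^ 2 := by
  ext s
  rcases le_or_gt s a with hs | hs
  · simp [(h.div_id ha).deriv.eq_zero s hs, h.eq_zero s hs, h.deriv.eq_zero s hs]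
  · have hs0 : s ≠ 0 := (ha.trans hs).ne'
    rw [((h.hasDerivAt s).fun_div (hasDerivAt_id' s) hs0).deriv]
    field_simp

lemma deriv_deriv_div_id (h : ExteriorProfile a φ) (ha : 0 < a) (s : ℝ) :
    deriv (deriv fun s => φ s / s) s =
      deriv (deriv φ) s / s - 2 * deriv φ s / s ^ 2 + 2 * φ s / s ^ 3 := by
  have hdiv : ∀ s, φ s / s ^ 2 = φ s / s / s := fun s => by ring
  rw [h.deriv_div_id ha, funext fun s => congrArg (deriv φ s / s - ·) (hdiv s),
    deriv_fun_sub ((h.deriv.div_id ha).hasDerivAt s).differentiableAt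
      (((h.div_id ha).div_id ha).hasDerivAt s).differentiableAt,
    h.deriv.deriv_div_id ha, (h.div_id ha).deriv_div_id ha, h.deriv_div_id ha]
  ring

lemma exists_deriv_eq (h : ExteriorProfile a φ) : ∃ F, ExteriorProfile a F ∧ deriv F = φ := by
  have hF : ∀ s, HasDerivAt (fun s => ∫ σ in a..s, φ σ) (φ s) s := fun s =>
    h.contDiff.continuous.integral_hasStrictDerivAt a s |>.hasDerivAt
  have hF' : deriv (fun s => ∫ σ in a..s, φ σ) = φ := funext fun s => (hF s).deriv
  refine ⟨_, ⟨contDiff_infty_iff_deriv.mpr ⟨fun s => (hF s).differentiableAt, ?_⟩, ?_⟩, hF'⟩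
  · rw [hF']
    exact h.contDiff
  · intro s hs
    refine intervalIntegral.integral_zero_ae (Eventually.of_forall fun σ hσ => h.eq_zero σ ?_)
    rw [uIoc_of_ge hs] at hσ
    exact hσ.2

lemma exists_deriv_div_eq (h : ExteriorProfile a φ) (ha : 0 ≤ a) :
    ∃ F, ExteriorProfile a F ∧ ∀ s, deriv F s / s = φ s := by
  obtain ⟨F, hF, hF'⟩ := h.id_mul.exists_deriv_eq
  refine ⟨F, hF, fun s => ?_⟩
  rcases eq_or_ne s 0 with rfl | hs
  · simp [h.eq_zero 0 ha]
  · rw [hF', mul_div_cancel_left₀ _ hs]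

end ExteriorProfile

lemma exteriorProfile_expNegInvGlue (a : ℝ) :
    ExteriorProfile a (fun s => expNegInvGlue (s - a)) :=
  ⟨expNegInvGlue.contDiff.comp (contDiff_id.sub contDiff_const),
    fun _ hs => expNegInvGlue.zero_of_nonpos (by linarith)⟩

end Profiles

section Radial

open scoped ContDiff Laplacian

variable {E : Type*} [NormedAddCommGroup E] [InnerProductSpace ℝ E] {a : ℝ} {φ : ℝ → ℝ}

lemma hasFDerivAt_norm {x : E} (hx : x ≠ 0) :
    HasFDerivAt (fun y : E => ‖y‖) (‖x‖⁻¹ • innerSL ℝ x) x := by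
  have hsqrt := (hasStrictFDerivAt_norm_sq x).hasFDerivAt.sqrt (by simpa using hx)
  simp only [Real.sqrt_sq (norm_nonneg _)] at hsqrt
  convert hsqrt using 1
  ext v
  simp only [smul_apply, coe_innerSL_apply, smul_eq_mul, one_div, mul_inv_rev, nsmul_eq_mul,
    Nat.cast_ofNat]
  field_simp

namespace ExteriorProfile

lemma contDiff_radial (h : ExteriorProfile a φ) (ha : 0 < a) :
    ContDiff ℝ ∞ (fun x : E => φ ‖x‖) := by
  refine contDiff_iff_contDiffAt.mpr fun x => ?_
  rcases eq_or_ne x 0 with rfl | hx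
  · refine contDiffAt_const (c := (0 : ℝ)) |>.congr_of_eventuallyEq ?_
    filter_upwards [Metric.ball_mem_nhds (0 : E) ha] with y hy
    exact h.eq_zero _ (mem_ball_zero_iff.mp hy).le
  · exact h.contDiff.contDiffAt.comp x (contDiffAt_norm ℝ hx)

lemma dirDeriv_radial (h : ExteriorProfile a φ) (ha : 0 < a) (x v : E) :
    dirDeriv v (fun y : E => φ ‖y‖) x = deriv φ ‖x‖ / ‖x‖ * inner ℝ x v := by
  rcases eq_or_ne x 0 with rfl | hx
  · have hzero : (fun y : E => φ ‖y‖) =ᶠ[𝓝 0] fun _ => 0 := by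
      filter_upwards [Metric.ball_mem_nhds (0 : E) ha] with y hy
      exact h.eq_zero _ (mem_ball_zero_iff.mp hy).le
    simp [dirDeriv, hzero.fderiv_eq]
  · have hcomp := (h.hasDerivAt ‖x‖).comp_hasFDerivAt x (hasFDerivAt_norm hx)
    change fderiv ℝ (φ ∘ fun y => ‖y‖) x v = _
    rw [hcomp.fderiv]
    simp [div_eq_mul_inv, mul_assoc]

lemma dirDeriv_dirDeriv_radial (h : ExteriorProfile a φ) (ha : 0 < a) (x v : E) :
    dirDeriv v (dirDeriv v fun y : E => φ ‖y‖) x =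
      (deriv (deriv φ) ‖x‖ / ‖x‖ - deriv φ ‖x‖ / ‖x‖ ^ 2) / ‖x‖ * inner ℝ x v ^ 2
        + deriv φ ‖x‖ / ‖x‖ * ‖v‖ ^ 2 := by
  have hψ := h.deriv.div_id ha
  have hinner : dirDeriv v (fun y : E => inner ℝ y v) x = ‖v‖ ^ 2 := by
    simp [dirDeriv, fderiv_inner_apply ℝ differentiableAt_fun_id (differentiableAt_const v)]
  rw [funext fun y => h.dirDeriv_radial ha y v,
    dirDeriv_mul ((hψ.contDiff_radial ha).differentiable (by simp) x)
      (differentiableAt_fun_id.inner ℝ (differentiableAt_const v)),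
    hψ.dirDeriv_radial ha, h.deriv.deriv_div_id ha, hinner]
  ring

end ExteriorProfile

variable [FiniteDimensional ℝ E]

lemma laplacian_eq_sum_dirDeriv {ι : Type*} [Fintype ι] (b : OrthonormalBasis ι ℝ E)
    {f : E → ℝ} {x : E} (hf : ContDiffAt ℝ 2 f x) :
    Δ f x = ∑ i, dirDeriv (b i) (dirDeriv (b i) f) x := by
  rw [InnerProductSpace.laplacian_eq_iteratedFDeriv_orthonormalBasis f b]
  simp [iteratedFDeriv_two_apply, dirDeriv_dirDeriv hf]

namespace ExteriorProfile

lemma laplacian_radial (h : ExteriorProfile a φ) (ha : 0 < a) (x : E) :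
    Δ (fun y : E => φ ‖y‖) x =
      deriv (deriv φ) ‖x‖ + (Module.finrank ℝ E - 1) * (deriv φ ‖x‖ / ‖x‖) := by
  have hC2 : ContDiffAt ℝ 2 (fun y : E => φ ‖y‖) x :=
    (h.contDiff_radial ha).contDiffAt.of_le (by norm_cast)
  rw [laplacian_eq_sum_dirDeriv (stdOrthonormalBasis ℝ E) hC2]
  simp only [h.dirDeriv_dirDeriv_radial ha, Finset.sum_add_distrib, ← Finset.mul_sum,
    OrthonormalBasis.norm_eq_one, OrthonormalBasis.sum_sq_inner_left]
  rcases eq_or_ne ‖x‖ 0 with hx | hx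
  · simp [hx, h.deriv.deriv.eq_zero 0 ha.le]
  · simp only [one_pow, Finset.sum_const, Finset.card_univ, Fintype.card_fin, nsmul_eq_mul,
      mul_one]
    field_simp
    ring

/-- In dimension three `r Δ` acts on radial functions as `∂_r² r`, so the radial wave equation
reduces to the one-dimensional one. -/
lemma laplacian_radial_div_norm (hE : Module.finrank ℝ E = 3) (h : ExteriorProfile a φ)
    (ha : 0 < a) (x : E) :
    Δ (fun y : E => φ ‖y‖ / ‖y‖) x = deriv (deriv φ) ‖x‖ / ‖x‖ := by
  rw [(h.div_id ha).laplacian_radial ha, h.deriv_deriv_div_id ha, h.deriv_div_id ha, hE]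
  push_cast
  ring

end ExteriorProfile

end Radial

section Integration

open scoped ContDiff Laplacian

section ByParts

variable {E : Type*} [NormedAddCommGroup E] [NormedSpace ℝ E] [FiniteDimensional ℝ E]
  [MeasurableSpace E] [BorelSpace E] {μ : Measure E} [μ.IsAddHaarMeasure] {f g : E → ℝ}

lemma integral_dirDeriv_mul (hf : ContDiff ℝ 1 f) (hfc : HasCompactSupport f)
    (hg : ContDiff ℝ 1 g) (v : E) :
    ∫ x, dirDeriv v f x * g x ∂μ = -∫ x, f x * dirDeriv v g x ∂μ := by
  have hf' : Continuous (dirDeriv v f) := (contDiff_dirDeriv (m := 0) hf (by simp) v).continuous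
  have hg' : Continuous (dirDeriv v g) := (contDiff_dirDeriv (m := 0) hg (by simp) v).continuous
  have hf'c : HasCompactSupport (dirDeriv v f) := hfc.fderiv_apply ℝ v
  refine neg_eq_iff_eq_neg.mp (integral_mul_fderiv_eq_neg_fderiv_mul_of_integrable ?_ ?_ ?_
    (fun x _ => hf.differentiable one_ne_zero x)
    fun x _ => hg.differentiable one_ne_zero x).symm
  · exact (hf'.mul hg.continuous).integrable_of_hasCompactSupport hf'c.mul_right
  · exact (hf.continuous.mul hg').integrable_of_hasCompactSupport hfc.mul_right
  · exact (hf.continuous.mul hg.continuous).integrable_of_hasCompactSupport hfc.mul_right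

end ByParts

section Green

variable {E : Type*} [NormedAddCommGroup E] [InnerProductSpace ℝ E] [FiniteDimensional ℝ E]
  [MeasurableSpace E] [BorelSpace E] {μ : Measure E} [μ.IsAddHaarMeasure] {f g : E → ℝ}

lemma integral_laplacian_mul_sub_mul_laplacian (hf : ContDiff ℝ 2 f) (hfc : HasCompactSupport f)
    (hg : ContDiff ℝ 2 g) : ∫ x, (Δ f x * g x - f x * Δ g x) ∂μ = 0 := by
  let b := stdOrthonormalBasis ℝ E
  have hf' (v : E) : ContDiff ℝ 1 (dirDeriv v f) := contDiff_dirDeriv hf (by norm_num) v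
  have hg' (v : E) : ContDiff ℝ 1 (dirDeriv v g) := contDiff_dirDeriv hg (by norm_num) v
  have hf'c (v : E) : HasCompactSupport (dirDeriv v f) := hfc.fderiv_apply ℝ v
  have hint (v : E) : Integrable (fun x => dirDeriv v (dirDeriv v f) x * g x) μ :=
    ((contDiff_dirDeriv (m := 0) (hf' v) (by simp) v).continuous.mul hg.continuous)
      |>.integrable_of_hasCompactSupport (HasCompactSupport.mul_right ((hf'c v).fderiv_apply ℝ v))
  have hint' (v : E) : Integrable (fun x => f x * dirDeriv v (dirDeriv v g) x) μ :=
    (hf.continuous.mul (contDiff_dirDeriv (m := 0) (hg' v) (by simp) v).continuous)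
      |>.integrable_of_hasCompactSupport hfc.mul_right
  have hsub (v : E) : Integrable
      (fun x => dirDeriv v (dirDeriv v f) x * g x - f x * dirDeriv v (dirDeriv v g) x) μ :=
    (hint v).sub (hint' v)
  simp only [laplacian_eq_sum_dirDeriv b hf.contDiffAt, laplacian_eq_sum_dirDeriv b hg.contDiffAt,
    Finset.sum_mul, Finset.mul_sum, ← Finset.sum_sub_distrib]
  rw [integral_finsetSum _ fun i _ => hsub (b i)]
  refine Finset.sum_eq_zero fun i _ => ?_
  rw [integral_sub (hint _) (hint' _),
    integral_dirDeriv_mul (hf' _) (hf'c _) (hg.of_le (by norm_num)),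
    integral_dirDeriv_mul (hf.of_le (by norm_num)) hfc (hg' _), neg_neg, sub_self]

end Green

section TimeDerivative

variable {E : Type*} [NormedAddCommGroup E] {f g : ℝ × E → ℝ} {τ : ℝ}

/-- The slices of `f` at times near `τ` are supported in a common ball, which is what allows one to
differentiate `∫ f(σ, x) dx` under the integral sign at `σ = τ`. -/
def SpatiallyBoundedSupportAt (f : ℝ × E → ℝ) (τ : ℝ) : Prop :=
  ∃ ρ, ∀ᶠ σ in 𝓝 τ, ∀ x, ρ < ‖x‖ → (σ, x) ∉ tsupport f

namespace SpatiallyBoundedSupportAt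

lemma mono (hf : SpatiallyBoundedSupportAt f τ) (hgf : tsupport g ⊆ tsupport f) :
    SpatiallyBoundedSupportAt g τ := by
  obtain ⟨ρ, hρ⟩ := hf
  exact ⟨ρ, hρ.mono fun σ hσ x hx hg => hσ x hx (hgf hg)⟩

lemma hasCompactSupport_slice [ProperSpace E] (hf : SpatiallyBoundedSupportAt f τ) :
    HasCompactSupport fun x => f (τ, x) := by
  obtain ⟨ρ, hρ⟩ := hf
  refine HasCompactSupport.of_support_subset_isCompact (isCompact_closedBall 0 ρ) fun x hx => ?_
  by_contra hx'
  rw [mem_closedBall_zero_iff, not_le] at hx'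
  exact hx (image_eq_zero_of_notMem_tsupport (hρ.self_of_nhds x hx'))

lemma hasDerivAt_integral_slice [NormedSpace ℝ E] [ProperSpace E] [MeasurableSpace E]
    [BorelSpace E] {μ : Measure E} [IsFiniteMeasureOnCompacts μ]
    (hsupp : SpatiallyBoundedSupportAt f τ) (hf : ∀ᶠ σ in 𝓝 τ, ∀ x, ContDiffAt ℝ 1 f (σ, x)) :
    HasDerivAt (fun σ => ∫ x, f (σ, x) ∂μ) (∫ x, dirDeriv (1, 0) f (τ, x) ∂μ) τ := by
  obtain ⟨ρ, hρ⟩ := id hsupp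
  obtain ⟨ε, hε, hball⟩ := Metric.nhds_basis_closedBall.eventually_iff.mp (hρ.and hf)
  have hf' : ∀ p ∈ Metric.closedBall τ ε ×ˢ univ, ContinuousAt (dirDeriv (1, 0) f) p :=
    fun p hp => (contDiffAt_dirDeriv (m := 0) ((hball hp.1).2 p.2) (by simp) _).continuousAt
  have hslice {h : ℝ × E → ℝ} {σ : ℝ} (hh : ∀ x, ContinuousAt h (σ, x)) :
      Continuous fun x => h (σ, x) :=
    continuous_iff_continuousAt.mpr fun x => (hh x).comp (by fun_prop)
  have hfσ : ∀ σ ∈ Metric.closedBall τ ε, Continuous fun x => f (σ, x) :=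
    fun σ hσ => hslice fun x => ((hball hσ).2 x).continuousAt
  obtain ⟨C, hC⟩ := ((isCompact_closedBall τ ε).prod
    (isCompact_closedBall (0 : E) ρ)).exists_bound_of_continuousOn (f := dirDeriv (1, 0) f)
    fun p hp => (hf' p ⟨hp.1, mem_univ _⟩).continuousWithinAt
  have hτ : τ ∈ Metric.closedBall τ ε := Metric.mem_closedBall_self hε.le
  refine (hasDerivAt_integral_of_dominated_loc_of_deriv_le
    (F := fun σ x => f (σ, x)) (F' := fun σ x => dirDeriv (1, 0) f (σ, x))
    (bound := (Metric.closedBall (0 : E) ρ).indicator fun _ => C)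
    (Metric.closedBall_mem_nhds τ hε) ?_ ?_ ?_ ?_ ?_ ?_).2
  · filter_upwards [Metric.closedBall_mem_nhds τ hε] with σ hσ
      using (hfσ σ hσ).aestronglyMeasurable
  · exact (hfσ τ hτ).integrable_of_hasCompactSupport hsupp.hasCompactSupport_slice
  · exact (hslice fun x => hf' (τ, x) ⟨hτ, mem_univ _⟩).aestronglyMeasurable
  · refine Eventually.of_forall fun x σ hσ => ?_
    by_cases hx : x ∈ Metric.closedBall 0 ρ
    · simpa only [indicator_of_mem hx] using hC (σ, x) ⟨hσ, hx⟩
    · have hσx := (hball hσ).1 x (by simpa using hx)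
      have hzero := image_eq_zero_of_notMem_tsupport
        fun hmem => hσx (tsupport_dirDeriv_subset (1, 0) f hmem)
      simp [indicator_of_notMem hx, hzero]
  · exact (integrable_indicator_iff measurableSet_closedBall).mpr
      (integrableOn_const measure_closedBall_lt_top.ne)
  · exact Eventually.of_forall fun x σ hσ =>
      hasDerivAt_time (((hball hσ).2 x).differentiableAt one_ne_zero)

end SpatiallyBoundedSupportAt

end TimeDerivative

end Integration

section Moments

open scoped ContDiff FourierTransform

lemma hasSum_integral_pow_div_factorial_mul {X : Type*} [TopologicalSpace X] [MeasurableSpace X]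
    [OpensMeasurableSpace X] {μ : Measure X} [IsFiniteMeasureOnCompacts μ] {h g : X → ℂ}
    (hh : Continuous h) (hg : Continuous g) (hgc : HasCompactSupport g) :
    HasSum (fun n : ℕ => ∫ x, h x ^ n / n.factorial * g x ∂μ)
      (∫ x, Complex.exp (h x) * g x ∂μ) := by
  obtain ⟨B, hB⟩ := hgc.isCompact.exists_bound_of_continuousOn hh.continuousOn
  have hint : Integrable g μ := hg.integrable_of_hasCompactSupport hgc
  have hbound (n : ℕ) (x : X) : ‖h x ^ n / n.factorial * g x‖ ≤ B ^ n / n.factorial * ‖g x‖ := by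
    by_cases hx : x ∈ tsupport g
    · rw [norm_mul, norm_div, norm_pow, Complex.norm_natCast]
      gcongr
      exact hB x hx
    · simp [image_eq_zero_of_notMem_tsupport hx]
  have hexp (x : X) :
      HasSum (fun n : ℕ => h x ^ n / n.factorial * g x) (Complex.exp (h x) * g x) := by
    rw [Complex.exp_eq_exp_ℂ]
    exact (NormedSpace.expSeries_div_hasSum_exp (h x)).mul_right (g x)
  exact hasSum_integral_of_dominated_convergence (fun n x => B ^ n / n.factorial * ‖g x‖)
    (fun n => Continuous.aestronglyMeasurable (by fun_prop))
    (fun n => Eventually.of_forall (hbound n))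
    (Eventually.of_forall fun x => (Real.summable_pow_div_factorial B).mul_right _)
    (by simpa only [tsum_mul_right] using hint.norm.const_mul _) (Eventually.of_forall hexp)

variable {E : Type*} [NormedAddCommGroup E] [InnerProductSpace ℝ E] {a : ℝ} {f : E → ℝ} {c : E}

lemma ExteriorProfile.dirDeriv_radial_mul_inner_pow {φ F : ℝ → ℝ} (hF : ExteriorProfile a F)
    (ha : 0 < a) (hF' : ∀ s, deriv F s / s = φ s) (n : ℕ) (x : E) :
    dirDeriv c (fun y => F ‖y‖ * inner ℝ y c ^ n) x =
      φ ‖x‖ * inner ℝ x c ^ (n + 1) + n * ‖c‖ ^ 2 * (F ‖x‖ * inner ℝ x c ^ (n - 1)) := by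
  have hinner : HasFDerivAt (fun y : E => inner ℝ y c) (innerSL ℝ c) x := by
    simpa only [real_inner_comm] using! (innerSL ℝ c).hasFDerivAt
  have hpow : dirDeriv c (fun y : E => inner ℝ y c ^ n) x
      = n * inner ℝ x c ^ (n - 1) * ‖c‖ ^ 2 := by
    simp [dirDeriv, (hinner.pow n).fderiv]
  rw [dirDeriv_mul ((hF.contDiff_radial ha).differentiable (by simp) x)
      (hinner.pow n).differentiableAt, hF.dirDeriv_radial ha, hpow, hF']
  ring

variable [FiniteDimensional ℝ E] [MeasurableSpace E] [BorelSpace E]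

lemma hasSum_fourier_of_hasCompactSupport {g : E → ℂ} (hg : Continuous g)
    (hgc : HasCompactSupport g) (w : E) :
    HasSum (fun n : ℕ => (-2 * π * Complex.I) ^ n / n.factorial *
      ∫ x, (inner ℝ x w : ℂ) ^ n * g x) (𝓕 g w) := by
  have hsum := hasSum_integral_pow_div_factorial_mul (μ := volume)
    (h := fun x => (-2 * π * inner ℝ x w : ℝ) * Complex.I) (by fun_prop) hg hgc
  simp only [Real.fourier_eq', smul_eq_mul]
  convert hsum using 1
  ext n
  rw [← integral_const_mul]
  congr with x
  push_cast
  ring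

lemma eq_zero_of_integral_mul_inner_pow_eq_zero {f : E → ℝ} (hf : Continuous f)
    (hfc : HasCompactSupport f) (hmom : ∀ (c : E) (n : ℕ), ∫ x, f x * inner ℝ x c ^ n = 0) :
    f = 0 := by
  let g : E → ℂ := fun x => f x
  have hg : Continuous g := by fun_prop
  have hgc : HasCompactSupport g := hfc.comp_left Complex.ofReal_zero
  have hfourier : 𝓕 g = 0 := by
    ext w
    refine (hasSum_fourier_of_hasCompactSupport hg hgc w).unique ?_
    have hzero (n : ℕ) : ∫ x, (inner ℝ x w : ℂ) ^ n * g x = 0 := by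
      rw [← Complex.ofReal_zero, ← hmom w n, ← integral_complex_ofReal]
      congr with x
      push_cast
      ring
    simpa only [hzero, mul_zero, Pi.zero_apply] using hasSum_zero
  have hinv := hg.fourierInv_fourier_eq (hg.integrable_of_hasCompactSupport hgc)
    (by simp [hfourier])
  ext x
  have hx := congrFun hinv x
  simp only [hfourier, Real.fourierInv_eq', Pi.zero_apply, smul_zero, integral_zero] at hx
  exact Complex.ofReal_eq_zero.mp hx.symm

/-- Integrating by parts trades the factor `⟨x, c⟩` for a derivative `∂_c`, because
`∂_c (F(r)) = φ(r) ⟨x, c⟩` when `F'(s) = s φ(s)`. -/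
lemma integral_mul_radial_mul_inner_pow_eq_zero {μ : Measure E} [μ.IsAddHaarMeasure]
    (ha : 0 < a) (hf : ContDiff ℝ ∞ f) (hfc : HasCompactSupport f)
    (hpair : ∀ k φ, ExteriorProfile a φ → ∫ x, (dirDeriv c)^[k] f x * φ ‖x‖ ∂μ = 0)
    {φ : ℝ → ℝ} (hφ : ExteriorProfile a φ) (n : ℕ) :
    ∫ x, f x * (φ ‖x‖ * inner ℝ x c ^ n) ∂μ = 0 := by
  induction n using Nat.strong_induction_on generalizing f φ with
  | _ n ih =>
  rcases n with - | n
  · simpa using hpair 0 φ hφ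
  obtain ⟨F, hF, hF'⟩ := hφ.exists_deriv_div_eq ha.le
  have hsmooth {ψ : ℝ → ℝ} (hψ : ExteriorProfile a ψ) (m : ℕ) :
      ContDiff ℝ ∞ fun x : E => ψ ‖x‖ * inner ℝ x c ^ m :=
    (hψ.contDiff_radial ha).mul ((contDiff_id.inner ℝ contDiff_const).pow m)
  have hint {ψ : ℝ → ℝ} (hψ : ExteriorProfile a ψ) (m : ℕ) :
      Integrable (fun x => f x * (ψ ‖x‖ * inner ℝ x c ^ m)) μ :=
    (hf.continuous.mul (hsmooth hψ m).continuous).integrable_of_hasCompactSupport hfc.mul_right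
  have hparts : ∫ x, f x * dirDeriv c (fun y => F ‖y‖ * inner ℝ y c ^ n) x ∂μ = 0 := by
    have hf' : ContDiff ℝ ∞ (dirDeriv c f) := contDiff_dirDeriv hf (by simp) c
    rw [← neg_eq_zero, ← integral_dirDeriv_mul (hf.of_le (by norm_cast)) hfc
      ((hsmooth hF n).of_le (by norm_cast))]
    exact ih n n.lt_succ_self hf' (hfc.fderiv_apply ℝ c) (fun k => hpair (k + 1)) hF
  have hlower : ∫ x, f x * (F ‖x‖ * inner ℝ x c ^ (n - 1)) ∂μ = 0 :=
    ih (n - 1) (by lia) hf hfc hpair hF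
  simp only [hF.dirDeriv_radial_mul_inner_pow ha hF', mul_add,
    mul_left_comm (f _) (n * ‖c‖ ^ 2)] at hparts
  rwa [integral_add (hint hφ (n + 1)) ((hint hF (n - 1)).const_mul _), integral_const_mul, hlower,
    mul_zero, add_zero] at hparts

theorem eq_zero_of_integral_iterate_dirDeriv_mul_radial_eq_zero (ha : 0 < a)
    (hf : ContDiff ℝ ∞ f) (hfc : HasCompactSupport f)
    (hpair : ∀ c k φ, ExteriorProfile a φ → ∫ x, (dirDeriv c)^[k] f x * φ ‖x‖ = 0)
    {x : E} (hx : a < ‖x‖) : f x = 0 := by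
  have hφ := exteriorProfile_expNegInvGlue a
  have hweighted : (fun x => f x * expNegInvGlue (‖x‖ - a)) = 0 := by
    refine eq_zero_of_integral_mul_inner_pow_eq_zero
      (hf.continuous.mul (hφ.contDiff_radial ha).continuous) hfc.mul_right fun c n => ?_
    simpa only [mul_assoc] using
      integral_mul_radial_mul_inner_pow_eq_zero ha hf hfc (hpair c) hφ n
  have hpos : 0 < expNegInvGlue (‖x‖ - a) := expNegInvGlue.pos_of_pos (sub_pos.mpr hx)
  exact (mul_eq_zero.mp (congrFun hweighted x)).resolve_right hpos.ne'

end Moments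

section Waves

open scoped ContDiff Laplacian

variable {J : Set ℝ} {u v : Spc → ℝ} {τ : ℝ}

lemma dt_eq_dirDeriv (u : Spc → ℝ) : dt u = dirDeriv (eVec 0) u := rfl

lemma box_eq_laplacian_slice {x : EuclideanSpace ℝ (Fin 3)} (hu : ContDiffAt ℝ 2 u (τ, x)) :
    box u (τ, x) = -dt (dt u) (τ, x) + Δ (fun y => u (τ, y)) x := by
  have hslice : ContDiffAt ℝ 2 (fun y => u (τ, y)) x :=
    hu.comp x (contDiffAt_const.prodMk contDiffAt_id)
  rw [laplacian_eq_sum_dirDeriv (EuclideanSpace.basisFun (Fin 3) ℝ) hslice]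
  simp only [dirDeriv_dirDeriv_slice hu, EuclideanSpace.basisFun_apply]
  rfl

lemma box_dirDeriv {p : Spc} (hu : ContDiffAt ℝ 3 u p) (w : Spc) :
    box (dirDeriv w u) p = dirDeriv w (box u) p := by
  have hdiff (e : Spc) : DifferentiableAt ℝ (dirDeriv e (dirDeriv e u)) p :=
    (contDiffAt_dirDeriv (m := 1) (contDiffAt_dirDeriv (m := 2) hu (by norm_num) e)
      (by norm_num) e).differentiableAt one_ne_zero
  change -dirDeriv (eVec 0) (dirDeriv (eVec 0) (dirDeriv w u)) p + ∑ i : Fin 3,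
      dirDeriv (eVec i.succ) (dirDeriv (eVec i.succ) (dirDeriv w u)) p =
    fderiv ℝ (fun q => -dirDeriv (eVec 0) (dirDeriv (eVec 0) u) q + ∑ i : Fin 3,
      dirDeriv (eVec i.succ) (dirDeriv (eVec i.succ) u) q) p w
  rw [fderiv_fun_add (hdiff _).fun_neg (DifferentiableAt.fun_sum fun i _ => hdiff _),
    fderiv_fun_neg, fderiv_fun_sum fun i _ => hdiff _]
  simp only [dirDeriv_dirDeriv_comm hu, add_apply, neg_apply, sum_apply]
  rfl

/-- `u` is a smooth solution of the free wave equation on the time slab `J × ℝ³`. -/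
structure IsWaveOn (J : Set ℝ) (u : Spc → ℝ) : Prop where
  contDiffAt : ∀ τ ∈ J, ∀ x, ContDiffAt ℝ ∞ u (τ, x)
  box_eq_zero : ∀ τ ∈ J, ∀ x, box u (τ, x) = 0

/-- The symplectic density `∂_t u v - u ∂_t v`, whose spatial integral is conserved by the wave
equation. -/
def wronskian (u v : Spc → ℝ) (p : Spc) : ℝ := dt u p * v p - u p * dt v p

lemma tsupport_wronskian_subset (u v : Spc → ℝ) : tsupport (wronskian u v) ⊆ tsupport u := by
  refine closure_minimal (fun p hp => ?_) (isClosed_tsupport u)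
  by_contra hpu
  have hdt : dt u p = 0 :=
    image_eq_zero_of_notMem_tsupport fun hmem => hpu (tsupport_dirDeriv_subset _ u hmem)
  exact hp (by simp [wronskian, hdt, image_eq_zero_of_notMem_tsupport hpu])

namespace IsWaveOn

lemma mono {K : Set ℝ} (hu : IsWaveOn J u) (hKJ : K ⊆ J) : IsWaveOn K u :=
  ⟨fun τ hτ => hu.contDiffAt τ (hKJ hτ), fun τ hτ => hu.box_eq_zero τ (hKJ hτ)⟩

lemma contDiff_slice (hu : IsWaveOn J u) (hτ : τ ∈ J) : ContDiff ℝ ∞ fun x => u (τ, x) :=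
  contDiff_iff_contDiffAt.mpr fun x =>
    (hu.contDiffAt τ hτ x).comp x (contDiffAt_const.prodMk contDiffAt_id)

lemma dt_dt_eq_laplacian (hu : IsWaveOn J u) (hτ : τ ∈ J) (x : EuclideanSpace ℝ (Fin 3)) :
    dt (dt u) (τ, x) = Δ (fun y => u (τ, y)) x := by
  have hbox := hu.box_eq_zero τ hτ x
  rw [box_eq_laplacian_slice ((hu.contDiffAt τ hτ x).of_le (by norm_cast))] at hbox
  linarith

protected lemma dirDeriv (hu : IsWaveOn J u) (hJ : IsOpen J) (w : Spc) :
    IsWaveOn J (dirDeriv w u) where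
  contDiffAt τ hτ x := contDiffAt_dirDeriv (hu.contDiffAt τ hτ x) (by simp) w
  box_eq_zero τ hτ x := by
    have hnear : box u =ᶠ[𝓝 (τ, x)] fun _ => 0 := by
      filter_upwards [(hJ.preimage continuous_fst).mem_nhds hτ] with p hp
        using hu.box_eq_zero p.1 hp p.2
    rw [box_dirDeriv ((hu.contDiffAt τ hτ x).of_le (by norm_cast)), dirDeriv_congr hnear]
    simp [dirDeriv]

lemma iterate_dirDeriv (hu : IsWaveOn J u) (hJ : IsOpen J) (w : Spc) (k : ℕ) :
    IsWaveOn J ((dirDeriv w)^[k] u) := by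
  induction k with
  | zero => exact hu
  | succ k ih =>
    rw [Function.iterate_succ_apply']
    exact ih.dirDeriv hJ w

lemma contDiffAt_wronskian (hu : IsWaveOn J u) (hv : IsWaveOn J v) (hτ : τ ∈ J)
    (x : EuclideanSpace ℝ (Fin 3)) : ContDiffAt ℝ ∞ (wronskian u v) (τ, x) :=
  ((contDiffAt_dirDeriv (hu.contDiffAt τ hτ x) (by simp) _).mul (hv.contDiffAt τ hτ x)).sub
    ((hu.contDiffAt τ hτ x).mul (contDiffAt_dirDeriv (hv.contDiffAt τ hτ x) (by simp) _))

lemma dt_wronskian (hu : IsWaveOn J u) (hv : IsWaveOn J v) (hτ : τ ∈ J)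
    (x : EuclideanSpace ℝ (Fin 3)) : dt (wronskian u v) (τ, x) =
      Δ (fun y => u (τ, y)) x * v (τ, x) - u (τ, x) * Δ (fun y => v (τ, y)) x := by
  have hu₀ := (hu.contDiffAt τ hτ x).differentiableAt (by simp)
  have hv₀ := (hv.contDiffAt τ hτ x).differentiableAt (by simp)
  have hu₁ : DifferentiableAt ℝ (dt u) (τ, x) :=
    (contDiffAt_dirDeriv (m := ∞) (hu.contDiffAt τ hτ x) (by simp) _).differentiableAt (by simp)
  have hv₁ : DifferentiableAt ℝ (dt v) (τ, x) :=
    (contDiffAt_dirDeriv (m := ∞) (hv.contDiffAt τ hτ x) (by simp) _).differentiableAt (by simp)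
  rw [← hu.dt_dt_eq_laplacian hτ, ← hv.dt_dt_eq_laplacian hτ]
  change dirDeriv (eVec 0) (fun p => dt u p * v p - u p * dt v p) (τ, x) = _
  rw [dirDeriv_sub (hu₁.fun_mul hv₀) (hu₀.fun_mul hv₁), dirDeriv_mul hu₁ hv₀, dirDeriv_mul hu₀ hv₁]
  simp only [dt_eq_dirDeriv]
  ring

lemma integrable_wronskian (hu : IsWaveOn J u) (hv : IsWaveOn J v) (hτ : τ ∈ J)
    (hsupp : SpatiallyBoundedSupportAt u τ) : Integrable fun x => wronskian u v (τ, x) := by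
  refine Continuous.integrable_of_hasCompactSupport (continuous_iff_continuousAt.mpr fun x => ?_)
    (hsupp.mono (tsupport_wronskian_subset u v)).hasCompactSupport_slice
  exact (hu.contDiffAt_wronskian hv hτ x).continuousAt.comp (by fun_prop)

lemma hasDerivAt_integral_wronskian (hJ : IsOpen J) (hu : IsWaveOn J u) (hv : IsWaveOn J v)
    (hτ : τ ∈ J) (hsupp : SpatiallyBoundedSupportAt u τ) :
    HasDerivAt (fun σ => ∫ x, wronskian u v (σ, x)) 0 τ := by
  have hderiv := (hsupp.mono (tsupport_wronskian_subset u v)).hasDerivAt_integral_slice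
    (μ := volume) (by
      filter_upwards [hJ.mem_nhds hτ] with σ hσ x
      exact (hu.contDiffAt_wronskian hv hσ x).of_le (by norm_cast))
  have huτ := (hu.contDiff_slice hτ).of_le (m := 2) (by norm_cast)
  have hvτ := (hv.contDiff_slice hτ).of_le (m := 2) (by norm_cast)
  convert hderiv using 1
  exact (integral_laplacian_mul_sub_mul_laplacian huτ hsupp.hasCompactSupport_slice hvτ).symm.trans
    (integral_congr_ae (Eventually.of_forall fun x => (hu.dt_wronskian hv hτ x).symm))

lemma integral_wronskian_const (hJ : IsOpen J) (hJc : IsPreconnected J) (hu : IsWaveOn J u)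
    (hv : IsWaveOn J v) (hsupp : ∀ σ ∈ J, SpatiallyBoundedSupportAt u σ) {τ' : ℝ} (hτ : τ ∈ J)
    (hτ' : τ' ∈ J) : ∫ x, wronskian u v (τ, x) = ∫ x, wronskian u v (τ', x) := by
  have hderiv := fun σ hσ => hu.hasDerivAt_integral_wronskian hJ hv hσ (hsupp σ hσ)
  exact hJ.is_const_of_deriv_eq_zero hJc
    (fun σ hσ => (hderiv σ hσ).differentiableAt.differentiableWithinAt)
    (fun σ hσ => (hderiv σ hσ).deriv) hτ hτ'

end IsWaveOn

/-- The outgoing (`ε = 1`) or incoming (`ε = -1`) spherical wave `F(r - ε (τ - t)) / r` with profile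
`F` at time `t`; the value at `r = 0` is `0`. -/
def sphericalWave (ε t : ℝ) (F : ℝ → ℝ) (p : Spc) : ℝ := F (rr p - ε * (p.1 - t)) / rr p

namespace ExteriorProfile

variable {a ε t : ℝ} {F : ℝ → ℝ}

lemma contDiffAt_sphericalWave (hF : ExteriorProfile a F) (hτ : 0 < a + ε * (τ - t))
    (x : EuclideanSpace ℝ (Fin 3)) : ContDiffAt ℝ ∞ (sphericalWave ε t F) (τ, x) := by
  rcases eq_or_ne x 0 with rfl | hx
  · have hnear : ∀ᶠ p : Spc in 𝓝 (τ, 0), rr p < a + ε * (p.1 - t) :=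
      ContinuousAt.eventually_lt (by unfold rr; fun_prop) (by fun_prop) (by simpa [rr] using hτ)
    refine contDiffAt_const (c := (0 : ℝ)) |>.congr_of_eventuallyEq ?_
    filter_upwards [hnear] with p hp
    simp [sphericalWave, hF.eq_zero (rr p - ε * (p.1 - t)) (by linarith)]
  · have hr : ContDiffAt ℝ ∞ rr (τ, x) := contDiffAt_snd.norm ℝ hx
    have hphase : ContDiffAt ℝ ∞ (fun p : Spc => rr p - ε * (p.1 - t)) (τ, x) :=
      hr.sub (contDiffAt_const.mul (contDiffAt_fst.sub contDiffAt_const))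
    exact (hF.contDiff.contDiffAt.comp _ hphase).div hr (norm_ne_zero_iff.mpr hx)

lemma dt_sphericalWave (hF : ExteriorProfile a F) (hτ : 0 < a + ε * (τ - t))
    (x : EuclideanSpace ℝ (Fin 3)) :
    dt (sphericalWave ε t F) (τ, x) = -ε * sphericalWave ε t (deriv F) (τ, x) := by
  have hdiff := (hF.contDiffAt_sphericalWave hτ x).differentiableAt (by simp)
  have hphase : HasDerivAt (fun σ => ‖x‖ - ε * (σ - t)) (-ε) τ := by
    simpa using (((hasDerivAt_id τ).sub_const t).const_mul ε).const_sub ‖x‖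
  have hderiv := ((hF.hasDerivAt _).comp τ hphase).div_const ‖x‖
  refine ((hasDerivAt_time hdiff).unique hderiv).trans ?_
  simp only [sphericalWave, rr]
  ring

lemma dt_dt_sphericalWave (hε : ε ^ 2 = 1) (hF : ExteriorProfile a F)
    (hτ : 0 < a + ε * (τ - t)) (x : EuclideanSpace ℝ (Fin 3)) :
    dt (dt (sphericalWave ε t F)) (τ, x) = sphericalWave ε t (deriv (deriv F)) (τ, x) := by
  have hnear : dt (sphericalWave ε t F) =ᶠ[𝓝 (τ, x)]
      fun p => -ε * sphericalWave ε t (deriv F) p := by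
    have hopen : ∀ᶠ p : Spc in 𝓝 (τ, x), 0 < a + ε * (p.1 - t) :=
      ContinuousAt.eventually_lt (by fun_prop) (by fun_prop) hτ
    filter_upwards [hopen] with p hp using hF.dt_sphericalWave hp p.2
  have hdiff := (hF.deriv.contDiffAt_sphericalWave hτ x).differentiableAt (by simp)
  calc dt (dt (sphericalWave ε t F)) (τ, x)
      = dirDeriv (eVec 0) (fun p => -ε * sphericalWave ε t (deriv F) p) (τ, x) :=
        dirDeriv_congr hnear _
    _ = -ε * dt (sphericalWave ε t (deriv F)) (τ, x) := by
        simp [dirDeriv, dt, pd, fderiv_const_mul hdiff]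
    _ = ε ^ 2 * sphericalWave ε t (deriv (deriv F)) (τ, x) := by
        rw [hF.deriv.dt_sphericalWave hτ]
        ring
    _ = sphericalWave ε t (deriv (deriv F)) (τ, x) := by rw [hε, one_mul]

lemma laplacian_sphericalWave (hF : ExteriorProfile a F) (hτ : 0 < a + ε * (τ - t))
    (x : EuclideanSpace ℝ (Fin 3)) :
    Δ (fun y => sphericalWave ε t F (τ, y)) x = sphericalWave ε t (deriv (deriv F)) (τ, x) := by
  have hlap := (hF.comp_sub_const (ε * (τ - t))).laplacian_radial_div_norm
    (E := EuclideanSpace ℝ (Fin 3)) (by simp) hτ x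
  have hderiv : deriv (fun s => F (s - ε * (τ - t))) = fun s => deriv F (s - ε * (τ - t)) :=
    funext (deriv_comp_sub_const F _)
  simpa only [hderiv, deriv_comp_sub_const] using! hlap

lemma isWaveOn_sphericalWave (hε : ε ^ 2 = 1) (hF : ExteriorProfile a F) :
    IsWaveOn {τ | 0 < a + ε * (τ - t)} (sphericalWave ε t F) where
  contDiffAt _ hτ x := hF.contDiffAt_sphericalWave hτ x
  box_eq_zero τ hτ x := by
    rw [box_eq_laplacian_slice ((hF.contDiffAt_sphericalWave hτ x).of_le (by norm_cast)),
      hF.dt_dt_sphericalWave hε hτ, hF.laplacian_sphericalWave hτ, neg_add_cancel]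

lemma wronskian_sphericalWave_eq_zero (hF : ExteriorProfile a F) (hτ : 0 < a + ε * (τ - t))
    (hcone : ∀ x, a + ε * (τ - t) < ‖x‖ → (τ, x) ∉ tsupport u)
    (x : EuclideanSpace ℝ (Fin 3)) : wronskian u (sphericalWave ε t F) (τ, x) = 0 := by
  rcases le_or_gt ‖x‖ (a + ε * (τ - t)) with hx | hx
  · have hphase : rr (τ, x) - ε * (τ - t) ≤ a := sub_le_iff_le_add.mpr hx
    simp [wronskian, hF.dt_sphericalWave hτ, sphericalWave, hF.eq_zero _ hphase,
      hF.deriv.eq_zero _ hphase]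
  · have hsupp : (τ, x) ∉ tsupport (wronskian u (sphericalWave ε t F)) :=
      fun hmem => hcone x hx (tsupport_wronskian_subset u _ hmem)
    exact image_eq_zero_of_notMem_tsupport hsupp

lemma wronskian_sphericalWave_self (hF : ExteriorProfile a F) (ha : 0 < a)
    (x : EuclideanSpace ℝ (Fin 3)) : wronskian u (sphericalWave ε t F) (t, x) =
      dt u (t, x) * (F ‖x‖ / ‖x‖) + ε * (u (t, x) * (deriv F ‖x‖ / ‖x‖)) := by
  have hdt := hF.dt_sphericalWave (ε := ε) (t := t) (τ := t) (by simpa using ha) x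
  rw [wronskian, hdt]
  simp only [sphericalWave, rr, sub_self, mul_zero, sub_zero]
  ring

end ExteriorProfile

namespace IsWaveOn

variable {a t : ℝ}

lemma integral_wronskian_sphericalWave_eq_zero {ε : ℝ} (hε : ε ^ 2 = 1) (ha : 0 < a)
    (hJ : IsOpen J) (hJc : J.OrdConnected) (hu : IsWaveOn J u)
    (hsupp : ∀ σ ∈ J, SpatiallyBoundedSupportAt u σ) (ht : t ∈ J) (hτ : τ ∈ J)
    (htτ : 0 ≤ ε * (τ - t)) (hcone : ∀ x, a + ε * (τ - t) < ‖x‖ → (τ, x) ∉ tsupport u)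
    {F : ℝ → ℝ} (hF : ExteriorProfile a F) :
    ∫ x, wronskian u (sphericalWave ε t F) (t, x) = 0 := by
  let K := {σ : ℝ | 0 < a + ε * (σ - t)}
  have hK : IsOpen K := isOpen_lt continuous_const (by fun_prop)
  have hKc : K.OrdConnected := by
    refine ⟨fun σ hσ σ' hσ' ρ hρ => ?_⟩
    simp only [K, mem_ofPred_eq] at hσ hσ' ⊢
    rcases le_total 0 ε with h | h
    · nlinarith [hρ.1]
    · nlinarith [hρ.2]
  have hconst := (hu.mono inter_subset_left).integral_wronskian_const (hJ.inter hK)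
    (hJc.inter hKc).isPreconnected ((hF.isWaveOn_sphericalWave hε).mono inter_subset_right)
    (fun σ hσ => hsupp σ hσ.1) ⟨ht, by simpa [K] using ha⟩ ⟨hτ, add_pos_of_pos_of_nonneg ha htτ⟩
  simp only [hconst, hF.wronskian_sphericalWave_eq_zero (add_pos_of_pos_of_nonneg ha htτ) hcone,
    integral_zero]

/-- Outgoing and incoming waves with the same data `F` have opposite velocities, so subtracting the
two conservation laws isolates the pairing of `u` with `F' / r`. -/
lemma integral_slice_mul_radial_eq_zero (hJ : IsOpen J) (hJc : J.OrdConnected)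
    (hu : IsWaveOn J u) (hsupp : ∀ σ ∈ J, SpatiallyBoundedSupportAt u σ) (ha : 0 < a) (ht : t ∈ J)
    (hfuture : ∃ τ ∈ J, t ≤ τ ∧ ∀ x, a + (τ - t) < ‖x‖ → (τ, x) ∉ tsupport u)
    (hpast : ∃ τ ∈ J, τ ≤ t ∧ ∀ x, a + (t - τ) < ‖x‖ → (τ, x) ∉ tsupport u)
    {φ : ℝ → ℝ} (hφ : ExteriorProfile a φ) : ∫ x, u (t, x) * φ ‖x‖ = 0 := by
  obtain ⟨τ₁, hτ₁, htτ₁, hcone₁⟩ := hfuture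
  obtain ⟨τ₂, hτ₂, htτ₂, hcone₂⟩ := hpast
  obtain ⟨F, hF, hF'⟩ := hφ.exists_deriv_div_eq ha.le
  have hout : ∫ x, wronskian u (sphericalWave 1 t F) (t, x) = 0 :=
    hu.integral_wronskian_sphericalWave_eq_zero (by norm_num) ha hJ hJc hsupp ht hτ₁
      (by linarith) (by simpa only [one_mul] using hcone₁) hF
  have hin : ∫ x, wronskian u (sphericalWave (-1) t F) (t, x) = 0 :=
    hu.integral_wronskian_sphericalWave_eq_zero (by norm_num) ha hJ hJc hsupp ht hτ₂
      (by linarith) (by simpa only [neg_one_mul, neg_sub] using hcone₂) hF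
  have hint {ε : ℝ} (hε : ε ^ 2 = 1) :
      Integrable fun x => wronskian u (sphericalWave ε t F) (t, x) :=
    (hu.mono inter_subset_left).integrable_wronskian
      ((hF.isWaveOn_sphericalWave hε).mono inter_subset_right)
      ⟨ht, by simpa using ha⟩ (hsupp t ht)
  have hdiff (x : EuclideanSpace ℝ (Fin 3)) : u (t, x) * φ ‖x‖ =
      (wronskian u (sphericalWave 1 t F) (t, x) - wronskian u (sphericalWave (-1) t F) (t, x)) / 2
      := by
    rw [hF.wronskian_sphericalWave_self ha, hF.wronskian_sphericalWave_self ha, hF']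
    ring
  simp only [hdiff]
  rw [integral_div, integral_sub (hint (by norm_num)) (hint (by norm_num)), hout, hin, sub_self,
    zero_div]

theorem eq_zero_of_cones (hJ : IsOpen J) (hJc : J.OrdConnected) (hu : IsWaveOn J u)
    (hsupp : ∀ σ ∈ J, SpatiallyBoundedSupportAt u σ) (ha : 0 < a) (ht : t ∈ J)
    (hfuture : ∃ τ ∈ J, t ≤ τ ∧ ∀ x, a + (τ - t) < ‖x‖ → (τ, x) ∉ tsupport u)
    (hpast : ∃ τ ∈ J, τ ≤ t ∧ ∀ x, a + (t - τ) < ‖x‖ → (τ, x) ∉ tsupport u)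
    {x : EuclideanSpace ℝ (Fin 3)} (hx : a < ‖x‖) : u (t, x) = 0 := by
  refine eq_zero_of_integral_iterate_dirDeriv_mul_radial_eq_zero ha (hu.contDiff_slice ht)
    (hsupp t ht).hasCompactSupport_slice (fun c k φ hφ => ?_) hx
  have hsub := tsupport_iterate_dirDeriv_subset ((0, c) : Spc) u k
  rw [iterate_dirDeriv_slice (hu.contDiffAt t ht)]
  exact (hu.iterate_dirDeriv hJ (0, c) k).integral_slice_mul_radial_eq_zero hJ hJc
    (fun σ hσ => (hsupp σ hσ).mono hsub) ha ht
    (hfuture.imp fun τ h => ⟨h.1, h.2.1, fun y hy hmem => h.2.2 y hy (hsub hmem)⟩)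
    (hpast.imp fun τ h => ⟨h.1, h.2.1, fun y hy hmem => h.2.2 y hy (hsub hmem)⟩) hφ

end IsWaveOn

end Waves

section Hyperboloid

variable {R₁ R₂ a t : ℝ}

/-- The part of `{t > 0}` outside the hyperboloid `r² - (t + R₂)² = R₁² - R₂²`. -/
def hyperboloidExterior (R₁ R₂ : ℝ) : Set Spc :=
  {p | 0 < p.1 ∧ R₁ ^ 2 - R₂ ^ 2 < rr p ^ 2 - (p.1 + R₂) ^ 2}

lemma isOpen_hyperboloidExterior (R₁ R₂ : ℝ) : IsOpen (hyperboloidExterior R₁ R₂) := by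
  have hr : Continuous rr := continuous_snd.norm
  exact (isOpen_lt continuous_const continuous_fst).inter (isOpen_lt continuous_const
    ((hr.pow 2).sub ((continuous_fst.add continuous_const).pow 2)))

lemma disjoint_tsupport_hyperboloidExterior {u : Spc → ℝ}
    (hu : ∀ p ∈ hyperboloidExterior R₁ R₂, u p = 0) :
    Disjoint (tsupport u) (hyperboloidExterior R₁ R₂) :=
  Disjoint.closure_left (disjoint_left.mpr fun p hp hmem => hp (hu p hmem))
    (isOpen_hyperboloidExterior R₁ R₂)

lemma mem_hyperboloidExterior_of_lt_norm {τ s : ℝ} {x : EuclideanSpace ℝ (Fin 3)} (hτ : 0 < τ)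
    (hs : 0 ≤ s) (hsR : R₁ ^ 2 - R₂ ^ 2 ≤ s ^ 2 - (τ + R₂) ^ 2) (hx : s < ‖x‖) :
    (τ, x) ∈ hyperboloidExterior R₁ R₂ :=
  ⟨hτ, hsR.trans_lt (sub_lt_sub_right (pow_lt_pow_left₀ hx hs two_ne_zero) _)⟩

lemma spatiallyBoundedSupportAt_of_disjoint (hR₂ : |R₂| < R₁) {u : Spc → ℝ}
    (hu : Disjoint (tsupport u) (hyperboloidExterior R₁ R₂)) (ht : 0 < t) :
    SpatiallyBoundedSupportAt u t := by
  obtain ⟨-, hlt⟩ := abs_lt.mp hR₂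
  have hR₁ : 0 < R₁ := (abs_nonneg R₂).trans_lt hR₂
  refine ⟨t + 1 + R₁, ?_⟩
  filter_upwards [Ioo_mem_nhds ht (lt_add_one t)] with σ ⟨hσ, hσt⟩ x hx hmem
  exact disjoint_left.mp hu hmem
    (mem_hyperboloidExterior_of_lt_norm (s := σ + R₁) hσ (by linarith) (by nlinarith)
      (by linarith))

/-- The hyperboloid is asymptotic to the light cone `r = τ + R₂`, and the cone `r = a + (τ - t)` is
a translate lying strictly outside it. -/
lemma exists_future_cone_subset_hyperboloidExterior (ha : 0 ≤ a) (ht : 0 < t) (hat : R₂ + t < a) :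
    ∃ τ ∈ Ioi 0, t ≤ τ ∧
      ∀ x, a + (τ - t) < ‖x‖ → (τ, x) ∈ hyperboloidExterior R₁ R₂ := by
  have hlim : Tendsto (fun τ => (a - t - R₂) * (a - t + R₂ + 2 * τ)) atTop atTop :=
    (tendsto_atTop_add_const_left _ _ (tendsto_id.const_mul_atTop two_pos)).const_mul_atTop
      (by linarith)
  obtain ⟨τ, hτ, htτ⟩ :=
    ((hlim.eventually_ge_atTop (R₁ ^ 2 - R₂ ^ 2)).and (eventually_ge_atTop t)).exists
  exact ⟨τ, ht.trans_le htτ, htτ, fun x hx =>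
    mem_hyperboloidExterior_of_lt_norm (ht.trans_le htτ) (by linarith) (by linarith) hx⟩

lemma exists_past_cone_subset_hyperboloidExterior (hR₁ : 0 ≤ R₁) (ha : 0 ≤ a) (ht : 0 < t)
    (hat : R₁ < a + t) :
    ∃ τ ∈ Ioi 0, τ ≤ t ∧
      ∀ x, a + (t - τ) < ‖x‖ → (τ, x) ∈ hyperboloidExterior R₁ R₂ := by
  have hinitial : ∀ᶠ τ in 𝓝 0, R₁ ^ 2 - R₂ ^ 2 < (a + (t - τ)) ^ 2 - (τ + R₂) ^ 2 := by
    refine ContinuousAt.eventually_lt (by fun_prop) (by fun_prop) ?_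
    nlinarith
  obtain ⟨τ, ⟨hτR, hτt⟩, hτ⟩ := ((hinitial.and (eventually_lt_nhds ht)).filter_mono
    nhdsWithin_le_nhds).and self_mem_nhdsWithin |>.exists (f := 𝓝[>] 0)
  exact ⟨τ, hτ, hτt.le, fun x hx =>
    mem_hyperboloidExterior_of_lt_norm hτ (by linarith) hτR.le hx⟩

end Hyperboloid

theorem stmt13_general (R₁ R₂ : ℝ) (hR₂ : |R₂| < R₁) (u : Spc → ℝ)
    (hu : ContDiffOn ℝ (⊤ : ℕ∞) u {p | 0 < p.1}) (hbox : ∀ p : Spc, 0 < p.1 → box u p = 0)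
    (hvan : ∀ p : Spc, 0 < p.1 →
      R₁ ^ 2 - R₂ ^ 2 < rr p ^ 2 - (p.1 + R₂) ^ 2 → u p = 0) :
    ∀ p : Spc, 0 < p.1 → R₁ < rr p + p.1 → R₂ < rr p - p.1 → u p = 0 := by
  rintro ⟨t, x⟩ ht hsum hdiff
  have hR₁ : 0 < R₁ := (abs_nonneg R₂).trans_lt hR₂
  have hwave : IsWaveOn (Ioi 0) u :=
    ⟨fun τ hτ y => hu.contDiffAt ((isOpen_Ioi.preimage continuous_fst).mem_nhds hτ),
      fun τ hτ y => hbox (τ, y) hτ⟩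
  have hdisj : Disjoint (tsupport u) (hyperboloidExterior R₁ R₂) :=
    disjoint_tsupport_hyperboloidExterior fun p hp => hvan p hp.1 hp.2
  obtain ⟨a, hlower, hax⟩ := exists_between
    (max_lt (sub_lt_iff_lt_add.mpr hsum) (lt_sub_iff_add_lt.mp hdiff))
  obtain ⟨ha₁, ha₂⟩ := max_lt_iff.mp hlower
  have ha : 0 < a := by linarith [(abs_lt.mp hR₂).1]
  obtain ⟨τ₁, hτ₁, htτ₁, hfuture⟩ := exists_future_cone_subset_hyperboloidExterior ha.le ht ha₂
  obtain ⟨τ₂, hτ₂, htτ₂, hpast⟩ :=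
    exists_past_cone_subset_hyperboloidExterior hR₁.le ha.le ht (sub_lt_iff_lt_add.mp ha₁)
  exact hwave.eq_zero_of_cones isOpen_Ioi ordConnected_Ioi
    (fun σ hσ => spatiallyBoundedSupportAt_of_disjoint hR₂ hdisj hσ) ha ht
    ⟨τ₁, hτ₁, htτ₁, fun y hy => disjoint_right.mp hdisj (hfuture y hy)⟩
    ⟨τ₂, hτ₂, htτ₂, fun y hy => disjoint_right.mp hdisj (hpast y hy)⟩ hax

/-- Remark 1.4 of the paper: for the free wave equation, vanishing
outside the hyperboloid `r² - (t+R₂)² = R₁² - R₂²` improves to vanishing on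
`{t > 0, r + t > R₁, r - t > R₂}`. -/
theorem stmt13 (R₁ R₂ : ℝ) (hR₁ : 0 < R₁) (hR₂ : |R₂| < R₁)
    (u : Spc → ℝ) (hu : ContDiff ℝ (⊤ : ℕ∞) u) (hbox : ∀ p : Spc, box u p = 0)
    (hvan : ∀ p : Spc, 0 < p.1 →
      R₁ ^ 2 - R₂ ^ 2 < rr p ^ 2 - (p.1 + R₂) ^ 2 → u p = 0) :
    ∀ p : Spc, 0 < p.1 → R₁ < rr p + p.1 → R₂ < rr p - p.1 → u p = 0 :=
  stmt13_general R₁ R₂ hR₂ u hu.contDiffOn (fun p _ => hbox p) hvan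

end UCP
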